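/- For every natural number n, every real number α > 0, every symmetric positive-definite real n×n matrix Q, every totally symmetric real 3-tensor V_{μνρ}, and every totally symmetric real 5-tensor U_{μνρστ} (all indices in {1,…,n}), the normalized Gaussian integral of the product of the cubic vertex V₃(x) = (1/3!) ∑ V_{μνρ} x^μ x^ν x^ρ and the quintic vertex V₅(x) = (1/5!) ∑ U_{μνρστ} x^μ x^ν x^ρ x^σ x^τ satisfies ⟨V₃(x)·V₅(x)⟩ = (1/α⁴)·( W₃/12 + W₄/16 ), where W₃ = ∑ V_{abc} U_{defgh} (Q⁻¹)^{ad}(Q⁻¹)^{be}(Q⁻¹)^{cf}(Q⁻¹)^{gh} and W₄ = ∑ V_{abc} U_{defgh} (Q⁻¹)^{ab}(Q⁻¹)^{de}(Q⁻¹)^{fg}(Q⁻¹)^{ch} (all indices summed from 1 to n). -/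

import Mathlib

open MeasureTheory

namespace GaussVert

open MvPolynomial

/-- The quadratic form. -/
def qf {n : ℕ} (Q : Matrix (Fin n) (Fin n) ℝ) (x : Fin n → ℝ) : ℝ :=
  ∑ a, ∑ b, Q a b * x a * x b

lemma qf_continuous {n : ℕ} (Q : Matrix (Fin n) (Fin n) ℝ) : Continuous (qf Q) := by
  unfold qf; fun_prop

lemma qf_smul {n : ℕ} (Q : Matrix (Fin n) (Fin n) ℝ) (r : ℝ) (x : Fin n → ℝ) :
    qf Q (r • x) = r ^ 2 * qf Q x := by
  simp only [qf, Finset.mul_sum, Pi.smul_apply, smul_eq_mul]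
  refine Finset.sum_congr rfl fun a _ => Finset.sum_congr rfl fun b _ => ?_
  ring

lemma qf_pos {n : ℕ} {Q : Matrix (Fin n) (Fin n) ℝ} (hQ : Q.PosDef) {x : Fin n → ℝ}
    (hx : x ≠ 0) : 0 < qf Q x := by
  have h := hQ.dotProduct_mulVec_pos hx
  have e : star x ⬝ᵥ (Q.mulVec x) = qf Q x := by
    simp only [qf, dotProduct, Matrix.mulVec, Finset.mul_sum, star_trivial]
    refine Finset.sum_congr rfl fun a _ => Finset.sum_congr rfl fun b _ => ?_
    ring
  rwa [e] at h

lemma qf_bound {n : ℕ} {Q : Matrix (Fin n) (Fin n) ℝ} (hQ : Q.PosDef) :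
    ∃ c : ℝ, 0 < c ∧ ∀ x : Fin n → ℝ, c * ∑ i, x i ^ 2 ≤ qf Q x := by
  obtain ⟨m, hm, hle⟩ := (isCompact_sphere (0 : Fin n → ℝ) 1).exists_forall_le'
    (f := qf Q) (a := 0) (qf_continuous Q).continuousOn (fun x hx => by
      apply qf_pos hQ
      rintro rfl
      simp at hx)
  refine ⟨m / (n + 1), by positivity, fun x => ?_⟩
  by_cases hx : x = 0
  · subst hx; simp [qf]
  have hnx : 0 < ‖x‖ := norm_pos_iff.mpr hx
  have h1 : m * ‖x‖ ^ 2 ≤ qf Q x := by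
    have h := hle (‖x‖⁻¹ • x) (by simp [norm_smul, hnx.ne'])
    rw [qf_smul, inv_pow, inv_mul_eq_div, le_div_iff₀ (by positivity)] at h
    exact h
  have h2 : ∑ i, x i ^ 2 ≤ n * ‖x‖ ^ 2 := by
    calc ∑ i, x i ^ 2 ≤ ∑ _i : Fin n, ‖x‖ ^ 2 := by
          refine Finset.sum_le_sum fun i _ => ?_
          have := norm_le_pi_norm x i
          rw [← sq_abs, ← Real.norm_eq_abs]
          gcongr
      _ = _ := by simp
  refine le_trans ?_ h1
  rw [div_mul_eq_mul_div, div_le_iff₀ (by positivity)]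
  have h3 : ∑ i, x i ^ 2 ≤ (n + 1) * ‖x‖ ^ 2 := by nlinarith [sq_nonneg ‖x‖]
  nlinarith

/-- The Gaussian weight. -/
noncomputable def gw {n : ℕ} (α : ℝ) (Q : Matrix (Fin n) (Fin n) ℝ) (x : Fin n → ℝ) : ℝ :=
  Real.exp (-(α / 2) * qf Q x)

lemma gw_continuous {n : ℕ} (α : ℝ) (Q : Matrix (Fin n) (Fin n) ℝ) : Continuous (gw α Q) := by
  have := qf_continuous Q
  unfold gw; fun_prop

lemma integrable_pow_exp (c : ℝ) (hc : 0 < c) (k : ℕ) :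
    Integrable (fun x : ℝ => x ^ k * Real.exp (-c * x ^ 2)) := by
  have h := integrable_rpow_mul_exp_neg_mul_sq hc (s := k)
    (by have : (0:ℝ) ≤ k := Nat.cast_nonneg k
        linarith)
  simpa using h

lemma integrable_poly {n : ℕ} {α : ℝ} (hα : 0 < α) {Q : Matrix (Fin n) (Fin n) ℝ}
    (hQ : Q.PosDef) (p : MvPolynomial (Fin n) ℝ) :
    Integrable (fun x : Fin n → ℝ => eval x p * gw α Q x) := by
  induction p using MvPolynomial.induction_on' with
  | add p q hp hq =>
    simp only [map_add, add_mul]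
    exact hp.add hq
  | monomial u a =>
    obtain ⟨c, hc, hb⟩ := qf_bound hQ
    have hI : Integrable (fun x : Fin n → ℝ =>
        ∏ i, (x i ^ (u i) * Real.exp (-(α / 2 * c) * x i ^ 2))) :=
      Integrable.fintype_prod (f := fun i (y : ℝ) => y ^ (u i) * Real.exp (-(α / 2 * c) * y ^ 2))
        (fun i => integrable_pow_exp _ (by positivity) _)
    refine (hI.const_mul a).mono ?_ ?_
    · have := gw_continuous α Q
      exact ((MvPolynomial.continuous_eval _).mul this).aestronglyMeasurable
    · refine Filter.Eventually.of_forall fun x => ?_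
      rw [Finset.prod_mul_distrib, ← Real.exp_sum, eval_monomial,
        Finsupp.prod_fintype _ _ (by simp), ← mul_assoc, norm_mul _ (gw α Q x),
        norm_mul _ (Real.exp _)]
      refine mul_le_mul_of_nonneg_left ?_ (norm_nonneg _)
      rw [gw, Real.norm_eq_abs, Real.norm_eq_abs, Real.abs_exp, Real.abs_exp, Real.exp_le_exp,
        ← Finset.mul_sum]
      have := hb x
      nlinarith

lemma hasLineDeriv_eval {n : ℕ} (p : MvPolynomial (Fin n) ℝ) (x : Fin n → ℝ) (c : Fin n) :
    HasLineDerivAt ℝ (fun y : Fin n → ℝ => eval y p) (eval x (pderiv c p)) x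
      (Pi.single c 1) := by
  unfold HasLineDerivAt
  induction p using MvPolynomial.induction_on with
  | C a => simpa using hasDerivAt_const (0:ℝ) a
  | add p q hp hq =>
    simp only [map_add]
    exact hp.add hq
  | mul_X p i hp =>
    have hX : HasDerivAt (fun t : ℝ => (x + t • (Pi.single c 1 : Fin n → ℝ)) i)
        ((Pi.single c 1 : Fin n → ℝ) i) 0 := by
      have := ((hasDerivAt_id (0:ℝ)).mul_const ((Pi.single c 1 : Fin n → ℝ) i)).const_add (x i)
      simpa using this
    have := hp.mul hX
    simp only [map_mul, eval_X, pderiv_mul, map_add, pderiv_X]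
    refine this.congr_deriv ?_
    simp only [zero_smul, add_zero]
    by_cases h : i = c
    · subst h; simp [add_comm]
    · simp [Pi.single_apply, h, Ne.symm h]

/-- The quadratic form as a polynomial. -/
noncomputable def qp {n : ℕ} (Q : Matrix (Fin n) (Fin n) ℝ) : MvPolynomial (Fin n) ℝ :=
  ∑ a, ∑ b, C (Q a b) * X a * X b

lemma eval_qp {n : ℕ} (Q : Matrix (Fin n) (Fin n) ℝ) (x : Fin n → ℝ) :
    eval x (qp Q) = qf Q x := by
  simp [qp, qf]

lemma pderiv_qp {n : ℕ} {Q : Matrix (Fin n) (Fin n) ℝ} (hs : Q.IsSymm) (c : Fin n) :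
    pderiv c (qp Q) = 2 * ∑ b, C (Q c b) * X b := by
  simp only [qp, map_sum, pderiv_mul, pderiv_C, pderiv_X, zero_mul, zero_add, Pi.single_apply,
    mul_ite, ite_mul, mul_one, mul_zero, Finset.sum_add_distrib, Finset.sum_ite_eq,
    Finset.mem_univ, if_true, eq_comm (a := c)]
  rw [two_mul]
  congr 1
  · rw [Finset.sum_comm]; simp
  · refine Finset.sum_congr rfl fun a _ => ?_
    simp [hs.apply a c]

lemma hasLineDeriv_gw {n : ℕ} (α : ℝ) {Q : Matrix (Fin n) (Fin n) ℝ} (hs : Q.IsSymm)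
    (x : Fin n → ℝ) (c : Fin n) :
    HasLineDerivAt ℝ (gw α Q) (-(α * ∑ b, Q c b * x b) * gw α Q x) x (Pi.single c 1) := by
  have h := hasLineDeriv_eval (qp Q) x c
  unfold HasLineDerivAt at h ⊢
  have h2 := (h.const_mul (-(α / 2))).exp
  simp only [eval_qp, pderiv_qp hs, zero_smul, add_zero] at h2
  refine h2.congr_deriv ?_
  simp only [gw, map_mul, map_sum, eval_C, eval_X, map_ofNat]
  ring

/-- The unnormalized Gaussian expectation. -/
noncomputable def ex {n : ℕ} (α : ℝ) (Q : Matrix (Fin n) (Fin n) ℝ)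
    (p : MvPolynomial (Fin n) ℝ) : ℝ := ∫ x : Fin n → ℝ, eval x p * gw α Q x

lemma ibp {n : ℕ} {α : ℝ} (hα : 0 < α) {Q : Matrix (Fin n) (Fin n) ℝ}
    (hs : Q.IsSymm) (hQ : Q.PosDef) (p : MvPolynomial (Fin n) ℝ) (c : Fin n) :
    ex α Q (pderiv c p) = ex α Q (C α * (∑ b, C (Q c b) * X b) * p) := by
  have key : (fun x : Fin n → ℝ => eval x p * (-(α * ∑ b, Q c b * x b) * gw α Q x))
      = fun x => -(eval x (C α * (∑ b, C (Q c b) * X b) * p) * gw α Q x) := by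
    funext x
    simp only [map_mul, map_sum, eval_C, eval_X]
    ring
  have h := integral_bilinear_hasLineDerivAt_right_eq_neg_left_of_integrable
    (μ := (volume : Measure (Fin n → ℝ))) (B := ContinuousLinearMap.mul ℝ ℝ)
    (f := fun y => eval y p) (f' := fun x => eval x (pderiv c p))
    (g := gw α Q) (g' := fun x => -(α * ∑ b, Q c b * x b) * gw α Q x)
    (v := Pi.single c 1) (integrable_poly hα hQ _)
    (by
      simp only [ContinuousLinearMap.mul_apply']
      rw [key]
      exact (integrable_poly hα hQ _).neg)
    (integrable_poly hα hQ p)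
    (fun x _ => hasLineDeriv_eval p x c) (fun x _ => hasLineDeriv_gw α hs x c)
  simp only [ContinuousLinearMap.mul_apply'] at h
  rw [key, integral_neg, neg_inj] at h
  exact h.symm

/-- The expectation as a linear map. -/
noncomputable def exL {n : ℕ} {α : ℝ} (hα : 0 < α) {Q : Matrix (Fin n) (Fin n) ℝ}
    (hQ : Q.PosDef) : MvPolynomial (Fin n) ℝ →ₗ[ℝ] ℝ where
  toFun := ex α Q
  map_add' p q := by
    simp only [ex, map_add, add_mul]
    exact integral_add (integrable_poly hα hQ p) (integrable_poly hα hQ q)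
  map_smul' r p := by
    simp only [ex, smul_eval, mul_assoc, RingHom.id_apply, smul_eq_mul]
    exact integral_const_mul r _

lemma stein {n : ℕ} {α : ℝ} (hα : 0 < α) {Q : Matrix (Fin n) (Fin n) ℝ}
    (hs : Q.IsSymm) (hQ : Q.PosDef) (a : Fin n) (p : MvPolynomial (Fin n) ℝ) :
    exL hα hQ (X a * p) = ∑ b, (α⁻¹ * Q⁻¹ a b) * exL hα hQ (pderiv b p) := by
  have h1 : ∀ c, exL hα hQ (pderiv c p) = α * ∑ b, Q c b * exL hα hQ (X b * p) := by
    intro c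
    have := ibp hα hs hQ p c
    change exL hα hQ _ = exL hα hQ _ at this
    rw [this, mul_assoc, ← smul_eq_C_mul, map_smul, Finset.sum_mul, map_sum, smul_eq_mul]
    congr 1
    refine Finset.sum_congr rfl fun b _ => ?_
    rw [mul_assoc, ← smul_eq_C_mul, map_smul, smul_eq_mul]
  have hinv : Q⁻¹ * Q = 1 := Matrix.nonsing_inv_mul Q (hQ.isUnit.map Matrix.detMonoidHom)
  have h2 : ∑ b, (α⁻¹ * Q⁻¹ a b) * exL hα hQ (pderiv b p)
      = ∑ d, (Q⁻¹ * Q) a d * exL hα hQ (X d * p) := by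
    simp only [h1, Matrix.mul_apply, Finset.mul_sum, Finset.sum_mul]
    rw [Finset.sum_comm]
    refine Finset.sum_congr rfl fun d _ => Finset.sum_congr rfl fun b _ => ?_
    field_simp
  rw [h2, hinv]
  simp [Matrix.one_apply]

section wick

variable {n : ℕ}

/-- Linear form. -/
noncomputable def P1 (T : Fin n → ℝ) : MvPolynomial (Fin n) ℝ := ∑ a, X a * C (T a)
/-- Quadratic form. -/
noncomputable def P2 (T : Fin n → Fin n → ℝ) : MvPolynomial (Fin n) ℝ := ∑ a, X a * P1 (T a)
/-- Cubic form. -/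
noncomputable def P3 (T : Fin n → Fin n → Fin n → ℝ) : MvPolynomial (Fin n) ℝ :=
  ∑ a, X a * P2 (T a)
/-- Quartic form. -/
noncomputable def P4 (T : Fin n → Fin n → Fin n → Fin n → ℝ) : MvPolynomial (Fin n) ℝ :=
  ∑ a, X a * P3 (T a)
/-- Quintic form. -/
noncomputable def P5 (T : Fin n → Fin n → Fin n → Fin n → Fin n → ℝ) :
    MvPolynomial (Fin n) ℝ := ∑ a, X a * P4 (T a)

lemma pderiv_step (F : Fin n → MvPolynomial (Fin n) ℝ) (b : Fin n) :
    pderiv b (∑ a, X a * F a) = F b + ∑ a, X a * pderiv b (F a) := by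
  simp only [map_sum, pderiv_mul, pderiv_X, Finset.sum_add_distrib, Pi.single_apply, ite_mul,
    one_mul, zero_mul]
  simp

lemma pd1 (T : Fin n → ℝ) (b : Fin n) : pderiv b (P1 T) = C (T b) := by
  rw [P1, pderiv_step]; simp

lemma pd2 (T : Fin n → Fin n → ℝ) (h : ∀ a b, T a b = T b a) (b : Fin n) :
    pderiv b (P2 T) = (2:ℝ) • P1 (T b) := by
  rw [P2, pderiv_step]
  simp only [pd1, h _ b]
  rw [← P1]; module

lemma pd3 (T : Fin n → Fin n → Fin n → ℝ) (h : ∀ a b, T a b = T b a)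
    (h2 : ∀ a b c, T a b c = T a c b) (b : Fin n) :
    pderiv b (P3 T) = (3:ℝ) • P2 (T b) := by
  rw [P3, pderiv_step]
  simp only [pd2 _ (h2 _), h _ b, mul_smul_comm, ← Finset.smul_sum]
  rw [← P2]; module

lemma pd4 (T : Fin n → Fin n → Fin n → Fin n → ℝ) (h : ∀ a b, T a b = T b a)
    (h2 : ∀ a b c, T a b c = T a c b) (h3 : ∀ a b c d, T a b c d = T a b d c) (b : Fin n) :
    pderiv b (P4 T) = (4:ℝ) • P3 (T b) := by
  rw [P4, pderiv_step]
  simp only [pd3 _ (h2 _) (h3 _), h _ b, mul_smul_comm, ← Finset.smul_sum]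
  rw [← P3]; module

lemma pd5 (T : Fin n → Fin n → Fin n → Fin n → Fin n → ℝ) (h : ∀ a b, T a b = T b a)
    (h2 : ∀ a b c, T a b c = T a c b) (h3 : ∀ a b c d, T a b c d = T a b d c)
    (h4 : ∀ a b c d e, T a b c d e = T a b c e d) (b : Fin n) :
    pderiv b (P5 T) = (5:ℝ) • P4 (T b) := by
  rw [P5, pderiv_step]
  simp only [pd4 _ (h2 _) (h3 _) (h4 _), h _ b, mul_smul_comm, ← Finset.smul_sum]
  rw [← P4]; module

lemma E2 (E : MvPolynomial (Fin n) ℝ →ₗ[ℝ] ℝ) (S : Fin n → Fin n → ℝ)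
    (H : ∀ a p, E (X a * p) = ∑ b, S a b * E (pderiv b p))
    (T : Fin n → Fin n → ℝ) : E (P2 T) = ∑ a, ∑ b, S a b * T a b * E 1 := by
  rw [P2, map_sum]
  refine Finset.sum_congr rfl fun a _ => ?_
  rw [H]
  refine Finset.sum_congr rfl fun b _ => ?_
  rw [pd1, ← mul_one (C _), ← smul_eq_C_mul, map_smul, smul_eq_mul, mul_assoc]

lemma E4 (E : MvPolynomial (Fin n) ℝ →ₗ[ℝ] ℝ) (S : Fin n → Fin n → ℝ)
    (H : ∀ a p, E (X a * p) = ∑ b, S a b * E (pderiv b p))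
    (T : Fin n → Fin n → Fin n → Fin n → ℝ)
    (h2 : ∀ a b c, T a b c = T a c b) (h3 : ∀ a b c d, T a b c d = T a b d c) :
    E (P4 T) = 3 * ∑ a, ∑ b, S a b * E (P2 (T a b)) := by
  rw [P4, map_sum, Finset.mul_sum]
  refine Finset.sum_congr rfl fun a _ => ?_
  rw [H, Finset.mul_sum]
  refine Finset.sum_congr rfl fun b _ => ?_
  rw [pd3 _ (h2 _) (h3 _), map_smul, smul_eq_mul]; ring

lemma E13 (E : MvPolynomial (Fin n) ℝ →ₗ[ℝ] ℝ) (S : Fin n → Fin n → ℝ)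
    (H : ∀ a p, E (X a * p) = ∑ b, S a b * E (pderiv b p))
    (T : Fin n → Fin n → Fin n → ℝ) (h : ∀ a b, T a b = T b a)
    (h2 : ∀ a b c, T a b c = T a c b) (c : Fin n) :
    E (X c * P3 T) = 3 * ∑ f, S c f * E (P2 (T f)) := by
  rw [H, Finset.mul_sum]
  refine Finset.sum_congr rfl fun b _ => ?_
  rw [pd3 _ h h2, map_smul, smul_eq_mul]; ring

lemma E114 (E : MvPolynomial (Fin n) ℝ →ₗ[ℝ] ℝ) (S : Fin n → Fin n → ℝ)
    (H : ∀ a p, E (X a * p) = ∑ b, S a b * E (pderiv b p))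
    (T : Fin n → Fin n → Fin n → Fin n → ℝ) (h : ∀ a b, T a b = T b a)
    (h2 : ∀ a b c, T a b c = T a c b) (h3 : ∀ a b c d, T a b c d = T a b d c) (b c : Fin n) :
    E (X b * (X c * P4 T)) = S b c * E (P4 T) + 4 * ∑ e, S b e * E (X c * P3 (T e)) := by
  rw [H]
  simp only [pderiv_mul, pderiv_X, pd4 T h h2 h3, map_add, mul_add, Finset.sum_add_distrib,
    Pi.single_apply, ite_mul, one_mul, zero_mul, mul_smul_comm, map_smul, smul_eq_mul,
    Finset.mul_sum, apply_ite E, map_zero, mul_ite, mul_zero]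
  congr 1
  · simp
  · refine Finset.sum_congr rfl fun e _ => ?_
    ring

lemma E15 (E : MvPolynomial (Fin n) ℝ →ₗ[ℝ] ℝ) (S : Fin n → Fin n → ℝ)
    (H : ∀ a p, E (X a * p) = ∑ b, S a b * E (pderiv b p))
    (T : Fin n → Fin n → Fin n → Fin n → Fin n → ℝ) (h : ∀ a b, T a b = T b a)
    (h2 : ∀ a b c, T a b c = T a c b) (h3 : ∀ a b c d, T a b c d = T a b d c)
    (h4 : ∀ a b c d e, T a b c d e = T a b c e d) (c : Fin n) :
    E (X c * P5 T) = 5 * ∑ d, S c d * E (P4 (T d)) := by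
  rw [H, Finset.mul_sum]
  refine Finset.sum_congr rfl fun b _ => ?_
  rw [pd5 _ h h2 h3 h4, map_smul, smul_eq_mul]; ring

lemma E1115 (E : MvPolynomial (Fin n) ℝ →ₗ[ℝ] ℝ) (S : Fin n → Fin n → ℝ)
    (H : ∀ a p, E (X a * p) = ∑ b, S a b * E (pderiv b p))
    (T : Fin n → Fin n → Fin n → Fin n → Fin n → ℝ) (h : ∀ a b, T a b = T b a)
    (h2 : ∀ a b c, T a b c = T a c b) (h3 : ∀ a b c d, T a b c d = T a b d c)
    (h4 : ∀ a b c d e, T a b c d e = T a b c e d) (a b c : Fin n) :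
    E (X a * (X b * (X c * P5 T))) = S a b * E (X c * P5 T) + S a c * E (X b * P5 T)
      + 5 * ∑ d, S a d * E (X b * (X c * P4 (T d))) := by
  rw [H]
  simp only [pderiv_mul, pderiv_X, pd5 T h h2 h3 h4, map_add, mul_add, Finset.sum_add_distrib,
    Pi.single_apply, ite_mul, one_mul, zero_mul, mul_smul_comm, map_smul, smul_eq_mul,
    Finset.mul_sum, apply_ite E, map_zero, mul_ite, mul_zero]
  rw [← add_assoc]
  congr 1
  · simp
  · refine Finset.sum_congr rfl fun e _ => ?_
    ring

lemma E35 (E : MvPolynomial (Fin n) ℝ →ₗ[ℝ] ℝ) (S : Fin n → Fin n → ℝ)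
    (H : ∀ a p, E (X a * p) = ∑ b, S a b * E (pderiv b p))
    (V : Fin n → Fin n → Fin n → ℝ) (v1 : ∀ a b c, V a b c = V b a c)
    (v2 : ∀ a b c, V a b c = V a c b)
    (T : Fin n → Fin n → Fin n → Fin n → Fin n → ℝ) (h : ∀ a b, T a b = T b a)
    (h2 : ∀ a b c, T a b c = T a c b) (h3 : ∀ a b c d, T a b c d = T a b d c)
    (h4 : ∀ a b c d e, T a b c d e = T a b c e d) :
    E (P3 V * P5 T) =
      (60 * (∑ a, ∑ b, ∑ c, ∑ d, ∑ e, ∑ f, ∑ g, ∑ h,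
        V a b c * T d e f g h * S a d * S b e * S c f * S g h)
      + 45 * (∑ a, ∑ b, ∑ c, ∑ d, ∑ e, ∑ f, ∑ g, ∑ h,
        V a b c * T d e f g h * S a b * S d e * S f g * S c h)) * E 1 := by
  have e1 : E (P3 V * P5 T) = ∑ a, ∑ b, ∑ c, V a b c * E (X a * (X b * (X c * P5 T))) := by
    simp only [P3, P2, P1, Finset.sum_mul, Finset.mul_sum, map_sum]
    refine Finset.sum_congr rfl fun a _ => Finset.sum_congr rfl fun b _ =>
      Finset.sum_congr rfl fun c _ => ?_
    rw [← smul_eq_mul (V a b c), ← map_smul, smul_eq_C_mul]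
    congr 1
    ring
  -- the one-point function
  let t : Fin n → ℝ := fun c => ∑ d, S c d * E (P4 (T d))
  have e2 : ∀ a b c, E (X a * (X b * (X c * P5 T))) =
      5 * (S a b * t c) + 5 * (S a c * t b) + 5 * (S b c * t a)
      + 60 * ∑ d, ∑ e, ∑ f, S a d * S b e * S c f * E (P2 (T d e f)) := by
    intro a b c
    rw [E1115 E S H T h h2 h3 h4]
    simp only [E15 E S H T h h2 h3 h4]
    have : ∀ d, E (X b * (X c * P4 (T d))) = S b c * E (P4 (T d))
        + 12 * ∑ e, ∑ f, S b e * S c f * E (P2 (T d e f)) := by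
      intro d
      rw [E114 E S H (T d) (h2 d) (h3 d) (h4 d)]
      simp only [E13 E S H (T d _) (h3 d _) (h4 d _), Finset.mul_sum]
      congr 1
      refine Finset.sum_congr rfl fun e _ => Finset.sum_congr rfl fun f _ => ?_
      ring
    simp only [this, t, mul_add, Finset.sum_add_distrib, Finset.mul_sum]
    rw [← add_assoc]
    congr 1
    · congr 1
      · congr 1 <;> refine Finset.sum_congr rfl fun e _ => ?_ <;> ring
      · refine Finset.sum_congr rfl fun e _ => ?_
        ring
    · refine Finset.sum_congr rfl fun d _ => Finset.sum_congr rfl fun e _ =>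
        Finset.sum_congr rfl fun f _ => ?_
      ring
  have ht : ∀ c, t c = 3 * (∑ d, ∑ e, ∑ f, ∑ g, ∑ h, T d e f g h * S d e * S f g * S c h)
      * E 1 := by
    intro c
    have q : ∀ d, E (P4 (T d)) = 3 * ∑ e, ∑ f, ∑ g, ∑ h, S e f * S g h * T d e f g h * E 1 := by
      intro d
      rw [E4 E S H (T d) (h3 d) (h4 d)]
      simp only [E2 E S H, Finset.mul_sum]
      refine Finset.sum_congr rfl fun e _ => Finset.sum_congr rfl fun f _ =>
        Finset.sum_congr rfl fun g _ => Finset.sum_congr rfl fun k _ => ?_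
      ring
    have rot : ∀ k d e f g, T k d e f g = T d e f g k := by
      intro k d e f g
      rw [h k d, h2 d k e, h3 d e k f, h4 d e f k g]
    simp only [t, q, Finset.mul_sum, Finset.sum_mul]
    -- move the first summation to the end
    rw [Finset.sum_comm]
    refine Finset.sum_congr rfl fun d _ => ?_
    rw [Finset.sum_comm]
    refine Finset.sum_congr rfl fun e _ => ?_
    rw [Finset.sum_comm]
    refine Finset.sum_congr rfl fun f _ => ?_
    rw [Finset.sum_comm]
    refine Finset.sum_congr rfl fun g _ => ?_
    refine Finset.sum_congr rfl fun k _ => ?_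
    rw [rot]; ring
  have r1 : ∑ a, ∑ b, ∑ c, V a b c * (S a c * t b) = ∑ a, ∑ b, ∑ c, V a b c * (S a b * t c) := by
    refine Finset.sum_congr rfl fun a _ => ?_
    rw [Finset.sum_comm]
    refine Finset.sum_congr rfl fun b _ => Finset.sum_congr rfl fun c _ => ?_
    rw [v2]
  have r2 : ∑ a, ∑ b, ∑ c, V a b c * (S b c * t a) = ∑ a, ∑ b, ∑ c, V a b c * (S a b * t c) := by
    rw [← r1, Finset.sum_comm]
    refine Finset.sum_congr rfl fun a _ => Finset.sum_congr rfl fun b _ =>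
      Finset.sum_congr rfl fun c _ => ?_
    rw [v1]
  have r3 : ∑ a, ∑ b, ∑ c, V a b c * (S a b * t c) = 3 * (∑ a, ∑ b, ∑ c, ∑ d, ∑ e, ∑ f, ∑ g, ∑ h,
        V a b c * T d e f g h * S a b * S d e * S f g * S c h) * E 1 := by
    simp only [ht, Finset.mul_sum, Finset.sum_mul]
    refine Finset.sum_congr rfl fun a _ => Finset.sum_congr rfl fun b _ =>
      Finset.sum_congr rfl fun c _ => Finset.sum_congr rfl fun d _ =>
      Finset.sum_congr rfl fun e _ => Finset.sum_congr rfl fun f _ =>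
      Finset.sum_congr rfl fun g _ => Finset.sum_congr rfl fun k _ => ?_
    ring
  have r4 : ∑ a, ∑ b, ∑ c, V a b c * (∑ d, ∑ e, ∑ f, S a d * S b e * S c f * E (P2 (T d e f)))
      = (∑ a, ∑ b, ∑ c, ∑ d, ∑ e, ∑ f, ∑ g, ∑ h,
        V a b c * T d e f g h * S a d * S b e * S c f * S g h) * E 1 := by
    simp only [E2 E S H, Finset.mul_sum, Finset.sum_mul]
    refine Finset.sum_congr rfl fun a _ => Finset.sum_congr rfl fun b _ =>
      Finset.sum_congr rfl fun c _ => Finset.sum_congr rfl fun d _ =>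
      Finset.sum_congr rfl fun e _ => Finset.sum_congr rfl fun f _ =>
      Finset.sum_congr rfl fun g _ => Finset.sum_congr rfl fun k _ => ?_
    ring
  have e3 : E (P3 V * P5 T) = 5 * (∑ a, ∑ b, ∑ c, V a b c * (S a b * t c))
      + 5 * (∑ a, ∑ b, ∑ c, V a b c * (S a c * t b))
      + 5 * (∑ a, ∑ b, ∑ c, V a b c * (S b c * t a))
      + 60 * ∑ a, ∑ b, ∑ c, V a b c *
        (∑ d, ∑ e, ∑ f, S a d * S b e * S c f * E (P2 (T d e f))) := by
    rw [e1]
    simp only [e2, mul_add, Finset.sum_add_distrib, mul_left_comm (V _ _ _) (5:ℝ),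
      mul_left_comm (V _ _ _) (60:ℝ), ← Finset.mul_sum]
  rw [e3, r1, r2, r3, r4]
  ring

end wick

end GaussVert

open GaussVert

/-- A cubic and a quintic vertex in `n` dimensions: for totally symmetric
tensors `V` (rank 3) and `U` (rank 5),
`⟨V₃(x) V₅(x)⟩ = (1/α⁴)(W₃/12 + W₄/16)`, where
`W₃ = V_{abc} U_{defgh} (Q⁻¹)^{ad}(Q⁻¹)^{be}(Q⁻¹)^{cf}(Q⁻¹)^{gh}` and
`W₄ = V_{abc} U_{defgh} (Q⁻¹)^{ab}(Q⁻¹)^{de}(Q⁻¹)^{fg}(Q⁻¹)^{ch}`. -/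
theorem gaussian_cubic_quintic_vertices_nd
    (n : ℕ) (α : ℝ) (hα : 0 < α) (Q : Matrix (Fin n) (Fin n) ℝ)
    (hQsymm : Q.IsSymm) (hQ : Q.PosDef)
    (V : Fin n → Fin n → Fin n → ℝ)
    (hV : ∀ (σ : Equiv.Perm (Fin 3)) (μ : Fin 3 → Fin n),
      V (μ (σ 0)) (μ (σ 1)) (μ (σ 2)) = V (μ 0) (μ 1) (μ 2))
    (U : Fin n → Fin n → Fin n → Fin n → Fin n → ℝ)
    (hU : ∀ (σ : Equiv.Perm (Fin 5)) (μ : Fin 5 → Fin n),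
      U (μ (σ 0)) (μ (σ 1)) (μ (σ 2)) (μ (σ 3)) (μ (σ 4))
        = U (μ 0) (μ 1) (μ 2) (μ 3) (μ 4)) :
    (∫ x : Fin n → ℝ, Real.exp (-(α / 2) * ∑ a, ∑ b, Q a b * x a * x b))⁻¹ *
      (∫ x : Fin n → ℝ,
        ((1 / 6) * ∑ a, ∑ b, ∑ c, V a b c * x a * x b * x c) *
        ((1 / 120) * ∑ a, ∑ b, ∑ c, ∑ d, ∑ e,
            U a b c d e * x a * x b * x c * x d * x e) *
        Real.exp (-(α / 2) * ∑ a, ∑ b, Q a b * x a * x b))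
    = (1 / α ^ 4) *
        ((∑ a, ∑ b, ∑ c, ∑ d, ∑ e, ∑ f, ∑ g, ∑ h,
            V a b c * U d e f g h *
              Q⁻¹ a d * Q⁻¹ b e * Q⁻¹ c f * Q⁻¹ g h) / 12 +
         (∑ a, ∑ b, ∑ c, ∑ d, ∑ e, ∑ f, ∑ g, ∑ h,
            V a b c * U d e f g h *
              Q⁻¹ a b * Q⁻¹ d e * Q⁻¹ f g * Q⁻¹ c h) / 16) := by
  have v1 : ∀ a b c, V a b c = V b a c := fun a b c => by
    exact (hV (Equiv.swap 0 1) ![b, a, c])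
  have v2 : ∀ a b c, V a b c = V a c b := fun a b c => by
    exact (hV (Equiv.swap 1 2) ![a, c, b])
  have u1 : ∀ a b, U a b = U b a := fun a b => by
    funext c d e
    exact (hU (Equiv.swap 0 1) ![b, a, c, d, e])
  have u2 : ∀ a b c, U a b c = U a c b := fun a b c => by
    funext d e
    exact (hU (Equiv.swap 1 2) ![a, c, b, d, e])
  have u3 : ∀ a b c d, U a b c d = U a b d c := fun a b c d => by
    funext e
    exact (hU (Equiv.swap 2 3) ![a, b, d, c, e])
  have u4 : ∀ a b c d e, U a b c d e = U a b c e d := fun a b c d e => by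
    exact (hU (Equiv.swap 3 4) ![a, b, c, e, d])
  have key := E35 (exL hα hQ) (fun a b => α⁻¹ * Q⁻¹ a b) (stein hα hQsymm hQ) V v1 v2
    U u1 u2 u3 u4
  have hZ : exL hα hQ 1 = ∫ x : Fin n → ℝ, Real.exp (-(α / 2) * ∑ a, ∑ b, Q a b * x a * x b) := by
    change ex α Q 1 = _
    simp [ex, gw, qf]
  have hN : (∫ x : Fin n → ℝ,
        ((1 / 6) * ∑ a, ∑ b, ∑ c, V a b c * x a * x b * x c) *
        ((1 / 120) * ∑ a, ∑ b, ∑ c, ∑ d, ∑ e,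
            U a b c d e * x a * x b * x c * x d * x e) *
        Real.exp (-(α / 2) * ∑ a, ∑ b, Q a b * x a * x b))
      = (1 / 720) * exL hα hQ (P3 V * P5 U) := by
    change _ = (1 / 720) * ex α Q (P3 V * P5 U)
    rw [ex, ← integral_const_mul]
    congr 1
    funext x
    have hv : MvPolynomial.eval x (P3 V) = ∑ a, ∑ b, ∑ c, V a b c * x a * x b * x c := by
      simp only [P3, P2, P1, map_sum, map_mul, MvPolynomial.eval_X, MvPolynomial.eval_C,
        Finset.mul_sum]
      refine Finset.sum_congr rfl fun a _ => Finset.sum_congr rfl fun b _ =>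
        Finset.sum_congr rfl fun c _ => ?_
      ring
    have hu : MvPolynomial.eval x (P5 U) = ∑ a, ∑ b, ∑ c, ∑ d, ∑ e,
            U a b c d e * x a * x b * x c * x d * x e := by
      simp only [P5, P4, P3, P2, P1, map_sum, map_mul, MvPolynomial.eval_X, MvPolynomial.eval_C,
        Finset.mul_sum]
      refine Finset.sum_congr rfl fun a _ => Finset.sum_congr rfl fun b _ =>
        Finset.sum_congr rfl fun c _ => Finset.sum_congr rfl fun d _ =>
        Finset.sum_congr rfl fun e _ => ?_
      ring
    rw [map_mul, hv, hu, gw, qf]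
    ring
  have hpos : 0 < exL hα hQ 1 := by
    rw [hZ]
    apply integral_exp_pos
    have := integrable_poly hα hQ (1 : MvPolynomial (Fin n) ℝ)
    simpa [gw, qf] using this
  have s1 : (∑ a, ∑ b, ∑ c, ∑ d, ∑ e, ∑ f, ∑ g, ∑ h, V a b c * U d e f g h * (α⁻¹ * Q⁻¹ a d)
        * (α⁻¹ * Q⁻¹ b e) * (α⁻¹ * Q⁻¹ c f) * (α⁻¹ * Q⁻¹ g h))
      = (1 / α ^ 4) * (∑ a, ∑ b, ∑ c, ∑ d, ∑ e, ∑ f, ∑ g, ∑ h,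
            V a b c * U d e f g h * Q⁻¹ a d * Q⁻¹ b e * Q⁻¹ c f * Q⁻¹ g h) := by
    simp only [Finset.mul_sum]
    refine Finset.sum_congr rfl fun a _ => Finset.sum_congr rfl fun b _ =>
      Finset.sum_congr rfl fun c _ => Finset.sum_congr rfl fun d _ =>
      Finset.sum_congr rfl fun e _ => Finset.sum_congr rfl fun f _ =>
      Finset.sum_congr rfl fun g _ => Finset.sum_congr rfl fun k _ => ?_
    field_simp
  have s2 : (∑ a, ∑ b, ∑ c, ∑ d, ∑ e, ∑ f, ∑ g, ∑ h, V a b c * U d e f g h * (α⁻¹ * Q⁻¹ a b)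
        * (α⁻¹ * Q⁻¹ d e) * (α⁻¹ * Q⁻¹ f g) * (α⁻¹ * Q⁻¹ c h))
      = (1 / α ^ 4) * (∑ a, ∑ b, ∑ c, ∑ d, ∑ e, ∑ f, ∑ g, ∑ h,
            V a b c * U d e f g h * Q⁻¹ a b * Q⁻¹ d e * Q⁻¹ f g * Q⁻¹ c h) := by
    simp only [Finset.mul_sum]
    refine Finset.sum_congr rfl fun a _ => Finset.sum_congr rfl fun b _ =>
      Finset.sum_congr rfl fun c _ => Finset.sum_congr rfl fun d _ =>
      Finset.sum_congr rfl fun e _ => Finset.sum_congr rfl fun f _ =>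
      Finset.sum_congr rfl fun g _ => Finset.sum_congr rfl fun k _ => ?_
    field_simp
  rw [hN, ← hZ, key, s1, s2]
  have hne := hpos.ne'
  generalize exL hα hQ 1 = z at hne
  field_simp
  ring
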